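/- arXiv:1112.6242 — 3 statements merged into one kernel-verified Lean document; each statement's English description precedes it below -/
import Mathlib

section
/- Let V be a real vector space and let Π, Q, R₀, Q₁ : V → V be linear maps satisfying: Π is idempotent, Q∘Π = Π∘Q = 0, Q∘R₀ = R₀∘Q = I − Π, and the balance condition Π∘Q₁ = 0. Let φ ∈ V satisfy Πφ = φ. Define φ₁ := −R₀Q₁φ, φ₂ := R₀(Q₁R₀Q₁ − ΠQ₁R₀Q₁Π)φ, and ψ := −ΠQ₁R₀Q₁φ. Then for every real ε ≠ 0 the exact asymptotic expansion holds: (ε⁻²Q + ε⁻¹Q₁)(φ + εφ₁ + ε²φ₂) = ψ + ε·Q₁φ₂. In particular, the limiting (solvability) term satisfies Πψ = −ΠQ₁R₀Q₁Πφ. -/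
/-!
Ordering `(ε⁻²Q + ε⁻¹Q₁)(φ + εφ₁ + ε²φ₂)` by powers of `ε` leaves the coefficients `Qφ`,
`Qφ₁ + Q₁φ`, `Qφ₂ + Q₁φ₁` and `Q₁φ₂`, so one needs `Qφ = 0`, `Qφ₁ + Q₁φ = 0` and
`Qφ₂ + Q₁φ₁ = ψ`. An equation `Qx = y` is solved by `x = R₀y` as soon as `Py = 0`. The balance
condition yields `PQ₁φ = 0`, the solvability condition for `φ₁`; for `φ₂` the obstruction is
`PQ₁φ₁`, and `ψ` is chosen equal to it.
-/

namespace SingularPerturbation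

variable {K V W : Type*} [Ring K] [AddCommGroup V] [Module K V] [AddCommGroup W] [Module K W]

theorem smul_map_add_smul_map_eq_expansion (Q Q₁ : V →ₗ[K] W) (φ φ₁ φ₂ : V) (ε : Kˣ) :
    (ε ^ 2)⁻¹ • Q (φ + ε • φ₁ + ε ^ 2 • φ₂) + ε⁻¹ • Q₁ (φ + ε • φ₁ + ε ^ 2 • φ₂) =
      (ε ^ 2)⁻¹ • Q φ + ε⁻¹ • (Q φ₁ + Q₁ φ) + (Q φ₂ + Q₁ φ₁) + ε • Q₁ φ₂ := by
  have h_sq : (ε ^ 2)⁻¹ * ε = ε⁻¹ := by group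
  have h_inv : ε⁻¹ * ε ^ 2 = ε := by group
  simp only [map_add, LinearMap.map_smul_of_tower, smul_add, smul_smul, h_sq, h_inv,
    inv_mul_cancel, one_smul]
  abel

theorem smul_map_add_smul_map_eq_of_cascade {Q Q₁ : V →ₗ[K] W} {φ φ₁ φ₂ : V} {ψ : W}
    (h₀ : Q φ = 0) (h₁ : Q φ₁ + Q₁ φ = 0) (h₂ : Q φ₂ + Q₁ φ₁ = ψ) (ε : Kˣ) :
    (ε ^ 2)⁻¹ • Q (φ + ε • φ₁ + ε ^ 2 • φ₂) + ε⁻¹ • Q₁ (φ + ε • φ₁ + ε ^ 2 • φ₂) =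
      ψ + ε • Q₁ φ₂ := by
  rw [smul_map_add_smul_map_eq_expansion, h₀, h₁, h₂, smul_zero, smul_zero, add_zero, zero_add]

variable {P : W →ₗ[K] W} {Q : V →ₗ[K] W} {R₀ : W →ₗ[K] V}

theorem map_potential_of_proj_eq_zero (hQR : Q ∘ₗ R₀ = LinearMap.id - P) {y : W} (hy : P y = 0) :
    Q (R₀ y) = y := by
  simpa [hy] using LinearMap.congr_fun hQR y

theorem map_potential_sub_proj (hP : P ∘ₗ P = P) (hQR : Q ∘ₗ R₀ = LinearMap.id - P) (y : W) :
    Q (R₀ (y - P y)) = y - P y := by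
  refine map_potential_of_proj_eq_zero hQR ?_
  rw [map_sub, ← LinearMap.comp_apply, hP, sub_self]

end SingularPerturbation

open SingularPerturbation in
/-- While `PQ₁ = 0` forces `ψ = 0`, the balance condition `PQ₁P = 0` allows `ψ ≠ 0`. -/
theorem singular_perturbation_full_solution_general {K V : Type*} [Ring K] [AddCommGroup V]
    [Module K V] (P Q R₀ Q₁ : V →ₗ[K] V)
    (hP : P ∘ₗ P = P) (hQP : Q ∘ₗ P = 0)
    (hQR : Q ∘ₗ R₀ = LinearMap.id - P)
    (hbal : P ∘ₗ Q₁ ∘ₗ P = 0)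
    (φ : V) (hφ : P φ = φ)
    (φ₁ φ₂ ψ : V)
    (hφ₁ : φ₁ = -(R₀ (Q₁ φ)))
    (hφ₂ : φ₂ = R₀ (Q₁ (R₀ (Q₁ φ)) - P (Q₁ (R₀ (Q₁ (P φ))))))
    (hψ : ψ = -(P (Q₁ (R₀ (Q₁ φ))))) :
    (∀ ε : Kˣ,
      (ε ^ 2)⁻¹ • Q (φ + ε • φ₁ + ε ^ 2 • φ₂) + ε⁻¹ • Q₁ (φ + ε • φ₁ + ε ^ 2 • φ₂) =
        ψ + ε • Q₁ φ₂) ∧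
    P ψ = -(P (Q₁ (R₀ (Q₁ (P φ))))) := by
  rw [hφ] at hφ₂ ⊢
  have h₀ : Q φ = 0 := by
    rw [← hφ, ← LinearMap.comp_apply, hQP, LinearMap.zero_apply]
  have hPQ₁φ : P (Q₁ φ) = 0 := by
    simpa only [LinearMap.comp_apply, hφ, LinearMap.zero_apply] using LinearMap.congr_fun hbal φ
  have h₁ : Q φ₁ + Q₁ φ = 0 := by
    rw [hφ₁, map_neg, map_potential_of_proj_eq_zero hQR hPQ₁φ, neg_add_cancel]
  have h₂ : Q φ₂ + Q₁ φ₁ = ψ := by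
    rw [hφ₂, map_potential_sub_proj hP hQR, hφ₁, map_neg, hψ]
    abel
  refine ⟨smul_map_add_smul_map_eq_of_cascade h₀ h₁ h₂, ?_⟩
  rw [hψ, map_neg, ← LinearMap.comp_apply, hP]

/-- Full solution of the singular perturbation problem: with projector `P`, operators
`Q, R₀, Q₁` satisfying `P∘P = P`, `Q∘P = P∘Q = 0`, `Q∘R₀ = R₀∘Q = I − P` and the balance
condition `P∘Q₁ = 0`, and `φ` with `Pφ = φ`, setting `φ₁ := −R₀Q₁φ`,
`φ₂ := R₀(Q₁R₀Q₁ − PQ₁R₀Q₁P)φ` and `ψ := −PQ₁R₀Q₁φ`, for every `ε ≠ 0`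
`(ε⁻²Q + ε⁻¹Q₁)(φ + εφ₁ + ε²φ₂) = ψ + ε·Q₁φ₂`, and `Pψ = −PQ₁R₀Q₁Pφ`. -/
theorem singular_perturbation_full_solution {V : Type*} [AddCommGroup V] [Module ℝ V]
    (P Q R₀ Q₁ : V →ₗ[ℝ] V)
    (hP : P ∘ₗ P = P) (hQP : Q ∘ₗ P = 0) (hPQ : P ∘ₗ Q = 0)
    (hQR : Q ∘ₗ R₀ = (LinearMap.id : V →ₗ[ℝ] V) - P)
    (hRQ : R₀ ∘ₗ Q = (LinearMap.id : V →ₗ[ℝ] V) - P)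
    (hbal : P ∘ₗ Q₁ = 0)
    (φ : V) (hφ : P φ = φ)
    (φ₁ φ₂ ψ : V)
    (hφ₁ : φ₁ = -(R₀ (Q₁ φ)))
    (hφ₂ : φ₂ = R₀ (Q₁ (R₀ (Q₁ φ)) - P (Q₁ (R₀ (Q₁ (P φ))))))
    (hψ : ψ = -(P (Q₁ (R₀ (Q₁ φ))))) :
    (∀ ε : ℝ, ε ≠ 0 →
      (ε ^ 2)⁻¹ • Q (φ + ε • φ₁ + ε ^ 2 • φ₂) + ε⁻¹ • Q₁ (φ + ε • φ₁ + ε ^ 2 • φ₂) =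
        ψ + ε • Q₁ φ₂) ∧
    P ψ = -(P (Q₁ (R₀ (Q₁ (P φ))))) := by
  have hbal' : P ∘ₗ Q₁ ∘ₗ P = 0 := by rw [← LinearMap.comp_assoc, hbal, LinearMap.zero_comp]
  exact (singular_perturbation_full_solution_general P Q R₀ Q₁ hP hQP hQR hbal' φ hφ φ₁ φ₂ ψ
    hφ₁ hφ₂ hψ).imp_left fun h ε hε => by simpa [Units.smul_def] using h (Units.mk0 ε hε)
end

section
/- Let V be a real vector space, let Π : V → V be an idempotent linear map, set Q := Π − I and R₀ := Π − I, and let S : V → V be a linear map satisfying the balance condition Π∘S∘Π = 0. Let c ∈ ℝ and let φ ∈ V satisfy Πφ = φ. Define φ₁ := −c·R₀Sφ and φ₂ := c²·R₀SR₀Sφ. Then for every real ε ≠ 0: (ε⁻²Q + ε⁻¹cS)(φ + εφ₁ + ε²φ₂) = −c²·ΠSR₀Sφ + ε·c³·SR₀SR₀Sφ. -/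
/-!
Let `Q = R₀ = P - 1` and `B = cS`, and collect `(ε⁻²Q + ε⁻¹B)(φ + εφ₁ + ε²φ₂)` by powers of `ε`:
the coefficients are `Qφ = 0`, `Qφ₁ + Bφ`, `Qφ₂ + Bφ₁` and `Bφ₂`. Here `φ₁ = -R₀Bφ` and
`φ₂ = -R₀Bφ₁`, and `P² = P` gives `Q(-R₀y) + y = Py` for every `y`. So the coefficients of `ε⁻¹` and
`ε⁰` are `PBφ` and `PBφ₁`, and the first one vanishes by the balance condition.
-/

section ScaleSeparation

variable {R V W : Type*} [Semiring R] [AddCommMonoid V] [Module R V] [AddCommMonoid W] [Module R W]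

theorem inv_sq_smul_apply_add_inv_smul_apply (A B : V →ₗ[R] W) (ε : Rˣ) (φ φ₁ φ₂ : V) :
    (ε ^ 2)⁻¹ • A (φ + ε • φ₁ + ε ^ 2 • φ₂) + ε⁻¹ • B (φ + ε • φ₁ + ε ^ 2 • φ₂) =
      (ε ^ 2)⁻¹ • A φ + ε⁻¹ • (A φ₁ + B φ) + (A φ₂ + B φ₁) + ε • B φ₂ := by
  have inv_sq_mul_self : (ε ^ 2)⁻¹ * ε = ε⁻¹ := by group
  have inv_mul_sq : ε⁻¹ * ε ^ 2 = ε := by group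
  have map_units_smul (T : V →ₗ[R] W) (u : Rˣ) (x : V) : T (u • x) = u • T x :=
    T.map_smul (u : R) x
  simp only [map_add, map_units_smul, smul_add, smul_smul, inv_sq_mul_self, inv_mul_sq,
    inv_mul_cancel, one_smul]
  abel

end ScaleSeparation

section Projection

variable {R V : Type*} [Ring R] [AddCommGroup V] [Module R V]

theorem sub_one_apply_neg_sub_one_apply_add {P : Module.End R V} (hP : IsIdempotentElem P)
    (y : V) : (P - 1) (-(P - 1) y) + y = P y := by
  have hPy : P (P y) = P y := LinearMap.congr_fun hP.eq y
  simp [hPy]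

theorem msre_generator_asymptotic_expansion_general {P B : Module.End R V}
    (hP : IsIdempotentElem P) {φ φ₁ φ₂ : V} (hφ : P φ = φ) (hbal : P (B φ) = 0)
    (hφ₁ : φ₁ = -(P - 1) (B φ)) (hφ₂ : φ₂ = (P - 1) (B ((P - 1) (B φ)))) (ε : Rˣ) :
    (ε ^ 2)⁻¹ • (P - 1) (φ + ε • φ₁ + ε ^ 2 • φ₂) + ε⁻¹ • B (φ + ε • φ₁ + ε ^ 2 • φ₂) =
      -P (B ((P - 1) (B φ))) + ε • B ((P - 1) (B ((P - 1) (B φ)))) := by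
  have order_neg_two : (P - 1) φ = 0 := by simp [hφ]
  have order_neg_one : (P - 1) φ₁ + B φ = 0 := by
    rw [hφ₁, sub_one_apply_neg_sub_one_apply_add hP, hbal]
  have hφ₂_rec : φ₂ = -(P - 1) (B φ₁) := by simp only [hφ₂, hφ₁, map_neg, neg_neg]
  have order_zero : (P - 1) φ₂ + B φ₁ = P (B φ₁) := by
    rw [hφ₂_rec, sub_one_apply_neg_sub_one_apply_add hP]
  rw [inv_sq_smul_apply_add_inv_smul_apply, order_neg_two, order_neg_one, order_zero, hφ₁, hφ₂]
  simp only [smul_zero, zero_add, map_neg]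

end Projection

/-- Operator-level content of Lemma 1 (MSRE): with projector `P`, `Q := P − I`, `R₀ := P − I`,
a linear map `S` satisfying the balance condition `P∘S∘P = 0`, a constant `c`, `φ` with
`Pφ = φ`, `φ₁ := −c·R₀Sφ` and `φ₂ := c²·R₀SR₀Sφ`, for every `ε ≠ 0`:
`(ε⁻²Q + ε⁻¹cS)(φ + εφ₁ + ε²φ₂) = −c²·PSR₀Sφ + ε·c³·SR₀SR₀Sφ`. -/
theorem msre_generator_asymptotic_expansion {V : Type*} [AddCommGroup V] [Module ℝ V]
    (P S : V →ₗ[ℝ] V) (hP : P ∘ₗ P = P)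
    (hbal : P ∘ₗ S ∘ₗ P = 0) (c : ℝ) (φ : V) (hφ : P φ = φ)
    (φ₁ φ₂ : V)
    (hφ₁ : φ₁ = -(c • (P - (LinearMap.id : V →ₗ[ℝ] V)) (S φ)))
    (hφ₂ : φ₂ = c ^ 2 •
      (P - (LinearMap.id : V →ₗ[ℝ] V)) (S ((P - (LinearMap.id : V →ₗ[ℝ] V)) (S φ)))) :
    ∀ ε : ℝ, ε ≠ 0 →
      (ε ^ 2)⁻¹ • (P - (LinearMap.id : V →ₗ[ℝ] V)) (φ + ε • φ₁ + ε ^ 2 • φ₂)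
          + ε⁻¹ • (c • S (φ + ε • φ₁ + ε ^ 2 • φ₂)) =
        -(c ^ 2 • P (S ((P - (LinearMap.id : V →ₗ[ℝ] V)) (S φ))))
          + (ε * c ^ 3) •
            S ((P - (LinearMap.id : V →ₗ[ℝ] V))
              (S ((P - (LinearMap.id : V →ₗ[ℝ] V)) (S φ)))) := by
  intro ε hε
  have hPSφ : P (S φ) = 0 := by simpa [hφ] using LinearMap.congr_fun hbal φ
  simpa [Units.smul_def, smul_smul, pow_succ, mul_assoc] using
    msre_generator_asymptotic_expansion_general (B := c • S) hP hφ (by simp [hPSφ])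
      (by simpa using hφ₁) (by simpa [smul_smul, pow_two] using hφ₂) (Units.mk0 ε hε)
end

section
/- Let n ≥ 2, let σ be the surface measure on the unit sphere S^{n-1} ⊂ ℝⁿ with N := σ(S^{n-1}), let c > 0, and let φ : ℝⁿ → ℝ be three times continuously differentiable. For ε ≠ 0 define the perturbed test function φ^ε : ℝⁿ × S^{n-1} → ℝ by φ^ε(x,v) := φ(x) − ε·c·⟨v, ∇φ(x)⟩ + ε²·c²·(D²φ(x)[v,v] − Δφ(x)/n), where D²φ(x)[v,v] is the Hessian quadratic form and Δ the Laplacian. Then for all x ∈ ℝⁿ, v ∈ S^{n-1} and ε ≠ 0: ε⁻²·[ (1/N)∫_{S^{n-1}} φ^ε(x,w) dσ(w) − φ^ε(x,v) ] − ε⁻¹·c·⟨v, ∇_x φ^ε(x,v)⟩ = (c²/n)·Δφ(x) − ε·c³·⟨v, ∇_x ( D²φ(x)[v,v] − Δφ(x)/n )⟩, where ∇_x denotes the gradient in the x variable with v held fixed. -/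
open MeasureTheory Real
open scoped InnerProductSpace

/-- Hessian quadratic form `D²φ(x)[v,v]`. -/
noncomputable def hessQF {n : ℕ} (φ : EuclideanSpace ℝ (Fin n) → ℝ)
    (x v : EuclideanSpace ℝ (Fin n)) : ℝ :=
  iteratedFDeriv ℝ 2 φ x ![v, v]

/-- Laplacian `Δφ(x) = Σ_i ∂²φ/∂x_i²`. -/
noncomputable def lapl {n : ℕ} (φ : EuclideanSpace ℝ (Fin n) → ℝ)
    (x : EuclideanSpace ℝ (Fin n)) : ℝ :=
  ∑ i : Fin n, hessQF φ x (EuclideanSpace.single i 1)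

/-- Surface measure on spheres in `ℝⁿ`: the `(n−1)`-dimensional Hausdorff measure. -/
noncomputable def sphMeasure (n : ℕ) : Measure (EuclideanSpace ℝ (Fin n)) :=
  μH[(n : ℝ) - 1]

/-- Total surface measure `N = σ(S^{n-1})` of the unit sphere. -/
noncomputable def sphN (n : ℕ) : ℝ :=
  (sphMeasure n (Metric.sphere (0 : EuclideanSpace ℝ (Fin n)) 1)).toReal

/-- The perturbed test function
`φ^ε(x,v) = φ(x) − εc⟨v,∇φ(x)⟩ + ε²c²(D²φ(x)[v,v] − Δφ(x)/n)`. -/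
noncomputable def phiEps {n : ℕ} (c ε : ℝ) (φ : EuclideanSpace ℝ (Fin n) → ℝ)
    (x v : EuclideanSpace ℝ (Fin n)) : ℝ :=
  φ x - ε * c * ⟪v, gradient φ x⟫_ℝ + ε ^ 2 * c ^ 2 * (hessQF φ x v - lapl φ x / n)

/-!
The averaging operator sees the corrector `φ₁` as an odd function on the sphere and the corrector
`φ₂` as a quadratic form from which the average has been subtracted, so it sends `φ^ε` to `φ`; the
powers `ε⁻²`, `ε⁻¹`, `ε⁰` of the generator can then be compared one by one. The average of a
quadratic form is `1 / n` times its trace by orthogonal invariance alone: reflections kill the mixed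
moments `∫ wᵢ wⱼ` and make the moments `∫ wᵢ²` equal, and the latter add up to `∫ ‖w‖²`.

Dividing by the total mass requires the Hausdorff measure of the sphere to be positive and finite:
the orthogonal projection onto a hyperplane maps the sphere onto a unit ball without increasing the
measure, while inverse stereographic projection, being Lipschitz on compact sets, covers each
hemisphere by the image of a ball in a hyperplane.
-/

open Metric Module

section OrthogonalInvariance

variable {E F : Type*} [NormedAddCommGroup E] [InnerProductSpace ℝ E] [MeasurableSpace E]
  [NormedAddCommGroup F] [NormedSpace ℝ F]

/-- Invariance of a measure under all linear isometries of the space onto itself, the symmetry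
that determines the second moments up to a scalar. -/
def IsOrthogonallyInvariant (μ : Measure E) : Prop :=
  ∀ e : E ≃ₗᵢ[ℝ] E, MeasurePreserving e μ μ

namespace IsOrthogonallyInvariant

variable [BorelSpace E] {μ : Measure E}

theorem integral_comp (hμ : IsOrthogonallyInvariant μ) (e : E ≃ₗᵢ[ℝ] E) (f : E → F) :
    ∫ w, f (e w) ∂μ = ∫ w, f w ∂μ :=
  (hμ e).integral_comp e.toHomeomorph.measurableEmbedding f

theorem integral_eq_zero_of_comp_eq_neg (hμ : IsOrthogonallyInvariant μ) (e : E ≃ₗᵢ[ℝ] E)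
    {f : E → F} (hf : ∀ w, f (e w) = -f w) : ∫ w, f w ∂μ = 0 := by
  have : IsAddTorsionFree F := .of_isTorsionFree ℝ F
  rw [← self_eq_neg]
  calc ∫ w, f w ∂μ = ∫ w, f (e w) ∂μ := (hμ.integral_comp e f).symm
    _ = -∫ w, f w ∂μ := by simp only [hf, integral_neg]

theorem integral_clm_eq_zero (hμ : IsOrthogonallyInvariant μ) (L : E →L[ℝ] F) :
    ∫ w, L w ∂μ = 0 :=
  hμ.integral_eq_zero_of_comp_eq_neg (LinearIsometryEquiv.neg ℝ) fun w => map_neg L w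

theorem integral_inner_mul_inner_eq_zero (hμ : IsOrthogonallyInvariant μ) {a b : E}
    (hab : ⟪a, b⟫_ℝ = 0) : ∫ w, ⟪a, w⟫_ℝ * ⟪b, w⟫_ℝ ∂μ = 0 := by
  let R := (ℝ ∙ a)ᗮ.reflection
  have hRa : R a = -a := Submodule.reflection_orthogonalComplement_singleton_eq_neg a
  have hRb : R b = b := Submodule.reflection_mem_subspace_eq_self
    (Submodule.mem_orthogonal_singleton_iff_inner_right.2 hab)
  have hR : ∀ u w, ⟪u, R w⟫_ℝ = ⟪R u, w⟫_ℝ := fun u w => by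
    rw [R.inner_map_eq_flip, (ℝ ∙ a)ᗮ.reflection_symm]
  refine hμ.integral_eq_zero_of_comp_eq_neg R fun w => ?_
  rw [hR, hR, hRa, hRb, inner_neg_left, neg_mul]

theorem integral_inner_sq_eq_of_norm_eq (hμ : IsOrthogonallyInvariant μ) {a b : E}
    (hab : ‖a‖ = ‖b‖) : ∫ w, ⟪a, w⟫_ℝ ^ 2 ∂μ = ∫ w, ⟪b, w⟫_ℝ ^ 2 ∂μ := by
  let R := (ℝ ∙ (a - b))ᗮ.reflection
  have hRa : R a = b := Submodule.reflection_sub hab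
  rw [← hμ.integral_comp R fun w => ⟪b, w⟫_ℝ ^ 2]
  simp only [← hRa, LinearIsometryEquiv.inner_map_map]

end IsOrthogonallyInvariant

section SecondMoments

variable [BorelSpace E] {μ : Measure E} {ι : Type*} [Fintype ι]

theorem integrable_inner_mul_inner [SecondCountableTopology E]
    (hint : Integrable (fun w => ‖w‖ ^ 2) μ) (a b : E) :
    Integrable (fun w => ⟪a, w⟫_ℝ * ⟪b, w⟫_ℝ) μ := by
  refine (hint.const_mul (‖a‖ * ‖b‖)).mono' (by fun_prop) (.of_forall fun w => ?_)
  calc ‖⟪a, w⟫_ℝ * ⟪b, w⟫_ℝ‖ = ‖⟪a, w⟫_ℝ‖ * ‖⟪b, w⟫_ℝ‖ := norm_mul _ _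
    _ ≤ (‖a‖ * ‖w‖) * (‖b‖ * ‖w‖) := by gcongr <;> exact norm_inner_le_norm _ _
    _ = ‖a‖ * ‖b‖ * ‖w‖ ^ 2 := by ring

namespace IsOrthogonallyInvariant

theorem integral_inner_sq (hμ : IsOrthogonallyInvariant μ)
    (hint : Integrable (fun w => ‖w‖ ^ 2) μ) (b : OrthonormalBasis ι ℝ E) (i : ι) :
    ∫ w, ⟪b i, w⟫_ℝ ^ 2 ∂μ = (∫ w, ‖w‖ ^ 2 ∂μ) / Fintype.card ι := by
  have : Nonempty ι := ⟨i⟩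
  have : FiniteDimensional ℝ E := b.toBasis.finiteDimensional_of_finite
  rw [eq_div_iff (by positivity)]
  calc (∫ w, ⟪b i, w⟫_ℝ ^ 2 ∂μ) * Fintype.card ι
      = ∑ j, ∫ w, ⟪b j, w⟫_ℝ ^ 2 ∂μ := by
        rw [Finset.sum_congr rfl fun j _ => hμ.integral_inner_sq_eq_of_norm_eq
          (b := b i) (by simp only [b.norm_eq_one])]
        simp [mul_comm]
    _ = ∫ w, ∑ j, ⟪b j, w⟫_ℝ ^ 2 ∂μ := by
        refine (integral_finsetSum _ fun j _ => ?_).symm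
        simpa only [sq] using integrable_inner_mul_inner hint (b j) (b j)
    _ = ∫ w, ‖w‖ ^ 2 ∂μ := by simp only [b.sum_sq_inner_right]

theorem integral_bilin [CompleteSpace F] (hμ : IsOrthogonallyInvariant μ)
    (hint : Integrable (fun w => ‖w‖ ^ 2) μ) (b : OrthonormalBasis ι ℝ E)
    (B : E →L[ℝ] E →L[ℝ] F) :
    ∫ w, B w w ∂μ = ((∫ w, ‖w‖ ^ 2 ∂μ) / Fintype.card ι) • ∑ i, B (b i) (b i) := by
  have : FiniteDimensional ℝ E := b.toBasis.finiteDimensional_of_finite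
  have hB : ∀ w, B w w = ∑ i, ∑ j, (⟪b i, w⟫_ℝ * ⟪b j, w⟫_ℝ) • B (b i) (b j) := fun w => by
    conv_lhs => rw [← b.sum_repr' w]
    simp only [map_sum, map_smul, sum_apply, smul_apply, Finset.smul_sum,
      smul_smul]
    rw [Finset.sum_comm]
    simp only [mul_comm]
  have hterm : ∀ i j, Integrable (fun w => (⟪b i, w⟫_ℝ * ⟪b j, w⟫_ℝ) • B (b i) (b j)) μ :=
    fun i j => (integrable_inner_mul_inner hint (b i) (b j)).smul_const _
  rw [integral_congr_ae (.of_forall hB),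
    integral_finsetSum _ fun i _ => integrable_finsetSum _ fun j _ => hterm i j, Finset.smul_sum]
  refine Finset.sum_congr rfl fun i _ => ?_
  rw [integral_finsetSum _ fun j _ => hterm i j, Finset.sum_eq_single i]
  · simp only [integral_smul_const, ← sq, hμ.integral_inner_sq hint b i]
  · intro j _ hji
    rw [integral_smul_const, hμ.integral_inner_mul_inner_eq_zero (b.inner_eq_zero hji.symm),
      zero_smul]
  · simp

end IsOrthogonallyInvariant

end SecondMoments

theorem isOrthogonallyInvariant_hausdorffMeasure_restrict_sphere [BorelSpace E] (d r : ℝ) :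
    IsOrthogonallyInvariant ((μH[d] : Measure E).restrict (sphere 0 r)) := fun e => by
  have h := (e.toIsometryEquiv.measurePreserving_hausdorffMeasure d).restrict_preimage
    (isClosed_sphere (x := (0 : E)) (ε := r)).measurableSet
  have hpre : e.toIsometryEquiv ⁻¹' sphere (0 : E) r = sphere 0 r := by
    ext w
    simp
  rwa [hpre] at h

end OrthogonalInvariance

section HausdorffMeasureSphere

theorem hausdorffMeasure_image_lt_top_of_contDiff {F G : Type*} [NormedAddCommGroup F]
    [NormedSpace ℝ F] [FiniteDimensional ℝ F] [MeasurableSpace F] [BorelSpace F]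
    [NormedAddCommGroup G] [NormedSpace ℝ G] [MeasurableSpace G] [BorelSpace G]
    {f : F → G} (hf : ContDiff ℝ 1 f) {K : Set F} (hK : IsCompact K) :
    μH[finrank ℝ F] (f '' K) < ⊤ := by
  obtain ⟨C, hC⟩ := hf.locallyLipschitz.locallyLipschitzOn.exists_lipschitzOnWith_of_compact hK
  calc μH[finrank ℝ F] (f '' K)
      ≤ (C : ENNReal) ^ (finrank ℝ F : ℝ) * μH[finrank ℝ F] K :=
        hC.hausdorffMeasure_image_le (Nat.cast_nonneg _)
    _ < ⊤ := ENNReal.mul_lt_top (by simp) hK.measure_lt_top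

variable {E : Type*} [NormedAddCommGroup E] [InnerProductSpace ℝ E]

theorem sphere_inter_inner_nonpos_subset_stereoInvFunAux_image {v : E} (hv : ‖v‖ = 1) :
    sphere (0 : E) 1 ∩ {w | ⟪v, w⟫_ℝ ≤ 0} ⊆
      (fun z : (ℝ ∙ v)ᗮ => stereoInvFunAux v z) '' closedBall 0 2 := by
  rintro w ⟨hw, hvw : ⟪v, w⟫_ℝ ≤ 0⟩
  have hwv : w ≠ v := by
    rintro rfl
    rw [real_inner_self_eq_norm_sq, hv] at hvw
    norm_num at hvw
  refine ⟨stereoToFun v w, ?_, congrArg Subtype.val (stereo_left_inv hv (x := ⟨w, hw⟩) hwv)⟩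
  have hproj : ‖(ℝ ∙ v)ᗮ.orthogonalProjectionOnto w‖ ≤ 1 :=
    ((ℝ ∙ v)ᗮ.norm_orthogonalProjectionOnto_apply_le w).trans_eq (mem_sphere_zero_iff_norm.1 hw)
  have hscale : ‖2 / (1 - ⟪v, w⟫_ℝ)‖ ≤ 2 := by
    rw [Real.norm_of_nonneg (by apply div_nonneg <;> linarith), div_le_iff₀ (by linarith)]
    linarith
  rw [mem_closedBall_zero_iff, stereoToFun_apply, norm_smul, innerSL_apply_apply]
  nlinarith [norm_nonneg ((ℝ ∙ v)ᗮ.orthogonalProjectionOnto w)]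

theorem closedBall_subset_orthogonalProjectionOnto_image_sphere {v : E} (hv : ‖v‖ = 1) :
    closedBall (0 : (ℝ ∙ v)ᗮ) 1 ⊆ (ℝ ∙ v)ᗮ.orthogonalProjectionOnto '' sphere (0 : E) 1 := by
  intro z hz
  have hz1 : ‖z‖ ≤ 1 := mem_closedBall_zero_iff.1 hz
  have hzv : ⟪(z : E), √(1 - ‖z‖ ^ 2) • v⟫_ℝ = 0 := by
    rw [inner_smul_right, Submodule.mem_orthogonal_singleton_iff_inner_left.1 z.2, mul_zero]
  refine ⟨z + √(1 - ‖z‖ ^ 2) • v, ?_, ?_⟩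
  · have hnorm : ‖(z : E) + √(1 - ‖z‖ ^ 2) • v‖ ^ 2 = 1 := by
      rw [norm_add_sq_real, hzv, norm_smul, hv, Real.norm_of_nonneg (Real.sqrt_nonneg _), mul_one,
        Real.sq_sqrt (by nlinarith [norm_nonneg z]), Submodule.coe_norm]
      ring
    rw [mem_sphere_zero_iff_norm]
    exact (pow_eq_one_iff_of_nonneg (norm_nonneg _) two_ne_zero).1 hnorm
  · rw [map_add, map_smul, Submodule.orthogonalProjectionOnto_mem_subspace_eq_self,
      Submodule.orthogonalProjectionOnto_orthogonalComplement_singleton_eq_zero, smul_zero,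
      add_zero]

variable (E) [MeasurableSpace E] [BorelSpace E] (m : ℕ) [hE : Fact (finrank ℝ E = m + 1)]

theorem hausdorffMeasure_sphere_lt_top : μH[m] (sphere (0 : E) 1) < ⊤ := by
  have : FiniteDimensional ℝ E := .of_fact_finrank_eq_succ m
  have hemisphere : ∀ v : E, ‖v‖ = 1 → μH[m] (sphere (0 : E) 1 ∩ {w | ⟪v, w⟫_ℝ ≤ 0}) < ⊤ := by
    intro v hv
    refine (measure_mono (sphere_inter_inner_nonpos_subset_stereoInvFunAux_image hv)).trans_lt ?_
    have hdim : finrank ℝ (ℝ ∙ v)ᗮ = m :=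
      Submodule.finrank_orthogonal_span_singleton (norm_ne_zero_iff.1 (hv ▸ one_ne_zero))
    rw [← hdim]
    exact hausdorffMeasure_image_lt_top_of_contDiff
      (contDiff_stereoInvFunAux.comp (ℝ ∙ v)ᗮ.subtypeL.contDiff) (isCompact_closedBall _ _)
  have : Nontrivial E := nontrivial_of_finrank_pos (R := ℝ) (hE.out ▸ m.succ_pos)
  obtain ⟨v, hv⟩ := exists_norm_eq E zero_le_one
  have hcover : sphere (0 : E) 1 ⊆
      sphere 0 1 ∩ {w | ⟪v, w⟫_ℝ ≤ 0} ∪ sphere 0 1 ∩ {w | ⟪-v, w⟫_ℝ ≤ 0} := fun w hw => by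
    rcases le_total ⟪v, w⟫_ℝ 0 with h | h
    · exact .inl ⟨hw, h⟩
    · exact .inr ⟨hw, by simpa using h⟩
  exact (measure_mono hcover).trans_lt
    (measure_union_lt_top (hemisphere v hv) (hemisphere (-v) (by rwa [norm_neg])))

theorem hausdorffMeasure_sphere_pos : 0 < μH[m] (sphere (0 : E) 1) := by
  have : FiniteDimensional ℝ E := .of_fact_finrank_eq_succ m
  have : Nontrivial E := nontrivial_of_finrank_pos (R := ℝ) (hE.out ▸ m.succ_pos)
  obtain ⟨v, hv⟩ := exists_norm_eq E zero_le_one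
  have hdim : finrank ℝ (ℝ ∙ v)ᗮ = m :=
    Submodule.finrank_orthogonal_span_singleton (norm_ne_zero_iff.1 (hv ▸ one_ne_zero))
  calc 0 < μH[m] (closedBall (0 : (ℝ ∙ v)ᗮ) 1) := by
        rw [← hdim]
        exact measure_closedBall_pos _ _ one_pos
    _ ≤ μH[m] ((ℝ ∙ v)ᗮ.orthogonalProjectionOnto '' sphere (0 : E) 1) :=
        measure_mono (closedBall_subset_orthogonalProjectionOnto_image_sphere hv)
    _ ≤ μH[m] (sphere (0 : E) 1) :=
        hausdorffMeasure_orthogonalProjectionOnto_le _ _ _ (Nat.cast_nonneg m)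

end HausdorffMeasureSphere

section SphMeasure

variable {n : ℕ}

instance fact_finrank_euclideanSpace_fin_succ (m : ℕ) :
    Fact (finrank ℝ (EuclideanSpace ℝ (Fin (m + 1))) = m + 1) :=
  ⟨finrank_euclideanSpace_fin⟩

theorem sphMeasure_sphere_lt_top (hn : n ≠ 0) :
    sphMeasure n (sphere (0 : EuclideanSpace ℝ (Fin n)) 1) < ⊤ := by
  obtain ⟨m, rfl⟩ := Nat.exists_eq_succ_of_ne_zero hn
  simpa [sphMeasure] using hausdorffMeasure_sphere_lt_top (EuclideanSpace ℝ (Fin (m + 1))) m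

theorem sphN_pos (hn : n ≠ 0) : 0 < sphN n := by
  refine ENNReal.toReal_pos ?_ (sphMeasure_sphere_lt_top hn).ne
  obtain ⟨m, rfl⟩ := Nat.exists_eq_succ_of_ne_zero hn
  simpa [sphMeasure] using (hausdorffMeasure_sphere_pos (EuclideanSpace ℝ (Fin (m + 1))) m).ne'

theorem integrableOn_sphere_of_continuous {F : Type*} [NormedAddCommGroup F] (hn : n ≠ 0)
    {f : EuclideanSpace ℝ (Fin n) → F} (hf : Continuous f) :
    IntegrableOn f (sphere 0 1) (sphMeasure n) :=
  hf.continuousOn.integrableOn_of_subset_isCompact (isCompact_sphere _ _)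
    isClosed_sphere.measurableSet subset_rfl (sphMeasure_sphere_lt_top hn).ne

theorem isOrthogonallyInvariant_sphMeasure_restrict_sphere :
    IsOrthogonallyInvariant ((sphMeasure n).restrict (sphere 0 1)) :=
  isOrthogonallyInvariant_hausdorffMeasure_restrict_sphere _ 1

theorem setIntegral_sphere_const (a : ℝ) :
    ∫ _ in sphere (0 : EuclideanSpace ℝ (Fin n)) 1, a ∂(sphMeasure n) = sphN n * a :=
  setIntegral_const a

theorem setIntegral_sphere_norm_sq :
    ∫ w in sphere (0 : EuclideanSpace ℝ (Fin n)) 1, ‖w‖ ^ 2 ∂(sphMeasure n) = sphN n := by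
  have h : Set.EqOn (fun w : EuclideanSpace ℝ (Fin n) => ‖w‖ ^ 2) (fun _ => 1) (sphere 0 1) :=
    fun w hw => by simp [mem_sphere_zero_iff_norm.1 hw]
  rw [setIntegral_congr_fun isClosed_sphere.measurableSet h, setIntegral_sphere_const, mul_one]

theorem hessQF_eq_fderiv_fderiv (φ : EuclideanSpace ℝ (Fin n) → ℝ)
    (x v : EuclideanSpace ℝ (Fin n)) : hessQF φ x v = fderiv ℝ (fderiv ℝ φ) x v v := by
  simp [hessQF, iteratedFDeriv_two_apply]

theorem continuous_hessQF (φ : EuclideanSpace ℝ (Fin n) → ℝ) (x : EuclideanSpace ℝ (Fin n)) :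
    Continuous (hessQF φ x) := by
  simp only [funext (hessQF_eq_fderiv_fderiv φ x)]
  fun_prop

theorem setIntegral_sphere_inner (a : EuclideanSpace ℝ (Fin n)) :
    ∫ w in sphere 0 1, ⟪w, a⟫_ℝ ∂(sphMeasure n) = 0 := by
  simpa only [innerSL_apply_apply, real_inner_comm] using
    isOrthogonallyInvariant_sphMeasure_restrict_sphere.integral_clm_eq_zero (innerSL ℝ a)

theorem setIntegral_sphere_hessQF (hn : n ≠ 0) (φ : EuclideanSpace ℝ (Fin n) → ℝ)
    (x : EuclideanSpace ℝ (Fin n)) :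
    ∫ w in sphere 0 1, hessQF φ x w ∂(sphMeasure n) = sphN n * (lapl φ x / n) := by
  have hint := integrableOn_sphere_of_continuous (n := n) hn (continuous_norm.pow 2)
  have h := isOrthogonallyInvariant_sphMeasure_restrict_sphere.integral_bilin hint
    (EuclideanSpace.basisFun (Fin n) ℝ) (fderiv ℝ (fderiv ℝ φ) x)
  simp only [← hessQF_eq_fderiv_fderiv, EuclideanSpace.basisFun_apply, Fintype.card_fin,
    smul_eq_mul, setIntegral_sphere_norm_sq] at h
  rw [h, lapl, div_mul_eq_mul_div, mul_div_assoc]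

theorem setIntegral_sphere_phiEps (hn : n ≠ 0) (c ε : ℝ) (φ : EuclideanSpace ℝ (Fin n) → ℝ)
    (x : EuclideanSpace ℝ (Fin n)) :
    ∫ w in sphere 0 1, phiEps c ε φ x w ∂(sphMeasure n) = sphN n * φ x := by
  have hconst : ∀ a : ℝ, IntegrableOn (fun _ => a) (sphere 0 1) (sphMeasure n) := fun a =>
    integrableOn_sphere_of_continuous hn continuous_const
  have hgrad : IntegrableOn (fun w => ε * c * ⟪w, gradient φ x⟫_ℝ) (sphere 0 1) (sphMeasure n) :=
    integrableOn_sphere_of_continuous hn (by fun_prop)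
  have hhess : IntegrableOn (hessQF φ x) (sphere 0 1) (sphMeasure n) :=
    integrableOn_sphere_of_continuous hn (continuous_hessQF φ x)
  have hcentred : ∫ w in sphere 0 1, (hessQF φ x w - lapl φ x / n) ∂(sphMeasure n) = 0 := by
    rw [integral_sub hhess (hconst _), setIntegral_sphere_hessQF hn, setIntegral_sphere_const,
      sub_self]
  calc ∫ w in sphere 0 1, phiEps c ε φ x w ∂(sphMeasure n)
      = ∫ _ in sphere (0 : EuclideanSpace ℝ (Fin n)) 1, φ x ∂(sphMeasure n)
        - ∫ w in sphere 0 1, ε * c * ⟪w, gradient φ x⟫_ℝ ∂(sphMeasure n)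
        + ∫ w in sphere 0 1, ε ^ 2 * c ^ 2 * (hessQF φ x w - lapl φ x / n) ∂(sphMeasure n) := by
        rw [← integral_sub (hconst _) hgrad]
        exact integral_add ((hconst _).sub hgrad) ((hhess.sub (hconst _)).const_mul _)
    _ = sphN n * φ x := by
        rw [integral_const_mul, integral_const_mul, setIntegral_sphere_inner, hcentred,
          setIntegral_sphere_const, mul_zero, mul_zero, sub_zero, add_zero]

end SphMeasure

section Transport

variable {n : ℕ} {φ : EuclideanSpace ℝ (Fin n) → ℝ} {x : EuclideanSpace ℝ (Fin n)}

theorem inner_gradient_inner_gradient (hφ : DifferentiableAt ℝ (fderiv ℝ φ) x)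
    (v : EuclideanSpace ℝ (Fin n)) :
    ⟪v, gradient (fun y => ⟪v, gradient φ y⟫_ℝ) x⟫_ℝ = hessQF φ x v := by
  simp only [inner_gradient_right, conj_trivial, hessQF_eq_fderiv_fderiv]
  rw [fderiv_clm_apply hφ (differentiableAt_const v)]
  simp

theorem differentiableAt_hessQF (hφ : DifferentiableAt ℝ (fderiv ℝ (fderiv ℝ φ)) x)
    (v : EuclideanSpace ℝ (Fin n)) : DifferentiableAt ℝ (fun y => hessQF φ y v) x := by
  simp only [hessQF_eq_fderiv_fderiv]
  fun_prop

theorem differentiableAt_lapl (hφ : DifferentiableAt ℝ (fderiv ℝ (fderiv ℝ φ)) x) :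
    DifferentiableAt ℝ (lapl φ) x :=
  DifferentiableAt.fun_sum fun _ _ => differentiableAt_hessQF hφ _

theorem inner_gradient_phiEps (hφ : ContDiffAt ℝ 3 φ x) (c ε : ℝ)
    (v : EuclideanSpace ℝ (Fin n)) :
    ⟪v, gradient (fun y => phiEps c ε φ y v) x⟫_ℝ =
      ⟪v, gradient φ x⟫_ℝ - ε * c * hessQF φ x v +
        ε ^ 2 * c ^ 2 * ⟪v, gradient (fun y => hessQF φ y v - lapl φ y / n) x⟫_ℝ := by
  have hD : ContDiffAt ℝ 2 (fderiv ℝ φ) x := hφ.fderiv_right (by norm_num)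
  have hD' : DifferentiableAt ℝ (fderiv ℝ φ) x := hD.differentiableAt (by norm_num)
  have hD2 : DifferentiableAt ℝ (fderiv ℝ (fderiv ℝ φ)) x :=
    (hD.fderiv_right (m := 1) (by norm_num)).differentiableAt (by norm_num)
  have h₀ : DifferentiableAt ℝ φ x := hφ.differentiableAt (by norm_num)
  have h₁ : DifferentiableAt ℝ (fun y => ⟪v, gradient φ y⟫_ℝ) x := by
    simp only [inner_gradient_right, conj_trivial]
    fun_prop
  have h₂ : DifferentiableAt ℝ (fun y => hessQF φ y v - lapl φ y / n) x :=
    (differentiableAt_hessQF hD2 v).sub ((differentiableAt_lapl hD2).mul_const (n : ℝ)⁻¹)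
  rw [← inner_gradient_inner_gradient hD' v]
  have hgrad : ∀ f : EuclideanSpace ℝ (Fin n) → ℝ, ⟪v, gradient f x⟫_ℝ = fderiv ℝ f x v :=
    fun f => by rw [inner_gradient_right, conj_trivial]
  simp only [hgrad, phiEps]
  rw [fderiv_fun_add (h₀.fun_sub (h₁.const_mul _)) (h₂.const_mul _),
    fderiv_fun_sub h₀ (h₁.const_mul _), fderiv_const_mul h₁, fderiv_const_mul h₂]
  simp only [add_apply, sub_apply, smul_apply, smul_eq_mul]

end Transport

theorem msre_generator_on_perturbed_test_function_general {n : ℕ} (hn : n ≠ 0) (c : ℝ)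
    {φ : EuclideanSpace ℝ (Fin n) → ℝ} {x : EuclideanSpace ℝ (Fin n)} (hφ : ContDiffAt ℝ 3 φ x)
    (v : EuclideanSpace ℝ (Fin n)) {ε : ℝ} (hε : ε ≠ 0) :
    (ε ^ 2)⁻¹ * ((1 / sphN n) *
          (∫ w in sphere (0 : EuclideanSpace ℝ (Fin n)) 1,
            phiEps c ε φ x w ∂(sphMeasure n)) - phiEps c ε φ x v)
      - ε⁻¹ * c * ⟪v, gradient (fun y => phiEps c ε φ y v) x⟫_ℝ =
    c ^ 2 / n * lapl φ x
      - ε * c ^ 3 * ⟪v, gradient (fun y => hessQF φ y v - lapl φ y / n) x⟫_ℝ := by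
  have hN : sphN n ≠ 0 := (sphN_pos hn).ne'
  rw [setIntegral_sphere_phiEps hn, inner_gradient_phiEps hφ, phiEps]
  field_simp
  ring

/-- Lemma 1 of the paper, concrete form: the MSRE generator `L^ε = ε⁻²Q + ε⁻¹cS(θ)` applied to
the perturbed test function `φ^ε` equals `(c²/n)Δφ(x)` plus a remainder of order `ε`. -/
theorem msre_generator_on_perturbed_test_function (n : ℕ) (hn : 2 ≤ n) (c : ℝ) (hc : 0 < c)
    (φ : EuclideanSpace ℝ (Fin n) → ℝ) (hφ : ContDiff ℝ 3 φ)
    (x v : EuclideanSpace ℝ (Fin n))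
    (hv : v ∈ Metric.sphere (0 : EuclideanSpace ℝ (Fin n)) 1)
    (ε : ℝ) (hε : ε ≠ 0) :
    (ε ^ 2)⁻¹ * ((1 / sphN n) *
          (∫ w in Metric.sphere (0 : EuclideanSpace ℝ (Fin n)) 1,
            phiEps c ε φ x w ∂(sphMeasure n)) - phiEps c ε φ x v)
      - ε⁻¹ * c * ⟪v, gradient (fun y => phiEps c ε φ y v) x⟫_ℝ =
    c ^ 2 / n * lapl φ x
      - ε * c ^ 3 * ⟪v, gradient (fun y => hessQF φ y v - lapl φ y / n) x⟫_ℝ :=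
  msre_generator_on_perturbed_test_function_general (by lia) c hφ.contDiffAt v hε
end
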